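/- Let G be a finite group of order greater than 1, let p be the largest prime divisor of |G|, and suppose there exists x ∈ G with [G : ⟨x⟩] < 2p. Then either G has a normal cyclic Sylow p-subgroup, or G is solvable and ⟨x⟩ is a maximal subgroup of G of index either p or p+1. -/

import Mathlib

/-!
If `p` divides the index of `A = ⟨x⟩`, then the index is `p`, so `A` is maximal. Otherwise a Sylow
`p`-subgroup fixes a point of `G ⧸ A`, so some Sylow `p`-subgroup `P` lies in `A`. As `A` is
abelian, it normalizes `P`, so the number of Sylow `p`-subgroups divides `[G : A] < 2p`; being
`1` mod `p`, it is `1` or `p + 1 = [G : A]`. In the second case `A` is again maximal: in a proper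
subgroup `M > A` the index of `A` is less than `p`, which makes `P` normal in `M`, although its
normalizer in `G` has index `p + 1 = [G : A]`.

Solvability is Herstein's theorem on abelian maximal subgroups `A`. If `A` is not normal, then it
is malnormal modulo its normal core, and the transfer to `A` shows that `A` meets the commutator
subgroup `N` trivially. So a nontrivial `a ∈ A` acts on `N` without fixed points and normalizes
exactly one Sylow `r`-subgroup of `N`, for every prime `r`. All of `A` then normalizes it, and by
maximality it is normal in `G` and generates `G` together with `A`.
-/

open MulAction
open scoped IsMulCommutative Pointwise

section

variable {G : Type*} [Group G]

theorem isSolvable_of_sup_eq_top (H N : Subgroup G) [N.Normal] [Group.IsSolvable H]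
    [Group.IsSolvable N] (h : H ⊔ N = ⊤) : Group.IsSolvable G := by
  have hsurj : Function.Surjective ((QuotientGroup.mk' N).comp H.subtype) := by
    rw [← MonoidHom.range_eq_top, MonoidHom.range_comp, Subgroup.range_subtype,
      ← Subgroup.map_top_of_surjective _ (QuotientGroup.mk'_surjective N), ← h, Subgroup.map_sup,
      QuotientGroup.map_mk'_self, sup_bot_eq]
  exact (Group.isSolvable_iff_subgroup_quotient N).2
    ⟨inferInstance, Group.isSolvable_of_surjective hsurj⟩

theorem isCoatom_of_index_prime {H : Subgroup G} (hH : H.index.Prime) :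
    IsCoatom H := by
  have : H.FiniteIndex := ⟨hH.ne_zero⟩
  refine ⟨fun h ↦ hH.ne_one (Subgroup.index_eq_one.2 h), fun M hM ↦ ?_⟩
  exact Subgroup.index_eq_one.1 <|
    ((Nat.dvd_prime hH).1 (Subgroup.index_dvd_of_le hM.le)).resolve_right
      (Subgroup.index_strictAnti hM).ne

theorem isCoatom_map_of_ker_le {H : Type*} [Group H] {f : G →* H} (hf : Function.Surjective f)
    {M : Subgroup G} (hM : IsCoatom M) (hker : f.ker ≤ M) : IsCoatom (M.map f) := by
  refine ⟨fun h ↦ hM.1 ?_, fun K hK ↦ ?_⟩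
  · rw [← Subgroup.comap_map_eq_self hker, h, Subgroup.comap_top]
  · have hcomap : K.comap f = ⊤ := hM.2 _ <| by
      rw [← Subgroup.comap_map_eq_self hker]
      exact (Subgroup.comap_lt_comap_of_surjective hf).2 hK
    rw [← Subgroup.map_comap_eq_self_of_surjective hf K, hcomap,
      Subgroup.map_top_of_surjective f hf]

end

section FixedPointFree

variable {N : Type*} [Group N] {p : ℕ}

theorem mulAut_smul_smul_sylow (φ : MulAut N) (n : N) (P : Sylow p N) :
    φ • n • P = φ n • φ • P := by
  have hconj : φ * MulAut.conj n = MulAut.conj (φ n) * φ := by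
    ext y; simp
  rw [Sylow.smul_def, Sylow.smul_def, ← mul_smul, hconj, mul_smul]

theorem mem_of_div_apply_mem_of_fixedPointFree {φ : N →* N} (hφ : MonoidHom.FixedPointFree φ)
    {H : Subgroup N} [Finite H] (hH : H ≤ H.comap φ) {n : N} (hn : n / φ n ∈ H) : n ∈ H := by
  let ψ : H →* H := (φ.comp H.subtype).codRestrict H fun h ↦ hH h.2
  have hψ : MonoidHom.FixedPointFree ψ := fun h hh ↦
    Subtype.ext (hφ h (congrArg Subtype.val hh))
  obtain ⟨h, hh⟩ := hψ.commutatorMap_surjective ⟨n / φ n, hn⟩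
  rw [← hφ.commutatorMap_injective (congrArg Subtype.val hh : (h : N) / φ h = n / φ n)]
  exact h.2

-- Lang's argument: every element of `N` has the form `n / φ n`.
theorem exists_sylow_smul_eq_of_fixedPointFree [Finite N] [Fact p.Prime] {φ : MulAut N}
    (hφ : MonoidHom.FixedPointFree φ) : ∃ P : Sylow p N, φ • P = P := by
  obtain ⟨P⟩ : Nonempty (Sylow p N) := inferInstance
  obtain ⟨m, hm⟩ := exists_smul_eq N (φ • P) P
  obtain ⟨n, rfl⟩ := hφ.commutatorMap_surjective m
  refine ⟨n⁻¹ • P, ?_⟩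
  calc φ • n⁻¹ • P = (φ n)⁻¹ • φ • P := by rw [mulAut_smul_smul_sylow, map_inv]
    _ = n⁻¹ • (n / φ n) • φ • P := by rw [smul_smul, ← mul_div_assoc, inv_mul_cancel, one_div]
    _ = n⁻¹ • P := congrArg (n⁻¹ • ·) hm

theorem sylow_eq_of_mulAut_smul_eq [Finite N] [Fact p.Prime] {φ : MulAut N}
    (hφ : MonoidHom.FixedPointFree φ) {P Q : Sylow p N} (hP : φ • P = P) (hQ : φ • Q = Q) :
    P = Q := by
  obtain ⟨m, rfl⟩ := exists_smul_eq N Q P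
  rw [mulAut_smul_smul_sylow, hQ] at hP
  have hstab : stabilizer N Q ≤ (stabilizer N Q).comap (φ : N →* N) := fun n hn ↦
    calc φ n • Q = φ • n • Q := by rw [mulAut_smul_smul_sylow, hQ]
      _ = Q := by rw [mem_stabilizer_iff.1 hn, hQ]
  have hm : m⁻¹ ∈ stabilizer N Q :=
    mem_of_div_apply_mem_of_fixedPointFree (φ := (φ : N →* N)) hφ hstab <| by
      simp [mul_smul, hP]
  exact mem_stabilizer_iff.1 (inv_mem_iff.1 hm)

end FixedPointFree

/-- A subgroup `A` of `G` is malnormal if `A` meets each conjugate `gAg⁻¹` with `g ∉ A` trivially.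
This is the condition that makes `A` a Frobenius complement. -/
def IsMalnormal {G : Type*} [Group G] (A : Subgroup G) : Prop :=
  ∀ ⦃a⦄, a ∈ A → a ≠ 1 → ∀ ⦃g⦄, g⁻¹ * a * g ∈ A → g ∈ A

namespace IsMalnormal

variable {G : Type*} [Group G] {A : Subgroup G}

theorem pow_index_eq_one_of_mem_commutator [IsMulCommutative A] [A.FiniteIndex]
    (hA : IsMalnormal A) {a : G} (ha : a ∈ A) (haG : a ∈ commutator G) : a ^ A.index = 1 := by
  have hconj (k : ℕ) (g : G) (hg : g⁻¹ * a ^ k * g ∈ A) : g⁻¹ * a ^ k * g = a ^ k := by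
    by_cases hk : a ^ k = 1
    · simp [hk]
    · have hgA : g ∈ A := hA (pow_mem ha k) hk hg
      rw [mul_assoc, setLike_mul_comm (pow_mem ha k) hgA, inv_mul_cancel_left]
  have htransfer := MonoidHom.transfer_eq_pow (MonoidHom.id A) a hconj
  rw [Abelianization.commutator_subset_ker (MonoidHom.transfer (MonoidHom.id A)) haG] at htransfer
  exact congrArg Subtype.val htransfer.symm

-- An element `a ∈ A` of prime order fixes the coset `A` in `G ⧸ A` and, by malnormality, no other.
theorem coprime_card_index [Finite G] (hA : IsMalnormal A) :
    (Nat.card A).Coprime A.index := by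
  refine Nat.Coprime.symm (Nat.coprime_of_dvd fun q hq hqi hqA ↦ ?_)
  have : Fact q.Prime := ⟨hq⟩
  obtain ⟨a, ha⟩ := exists_prime_orderOf_dvd_card' (G := A) q hqA
  have hone : ((1 : G) : G ⧸ A) ∈ fixedPoints (Subgroup.zpowers a) (G ⧸ A) := fun b ↦
    QuotientGroup.eq.2 (by simp)
  have hzpowers : IsPGroup q (Subgroup.zpowers a) :=
    IsPGroup.of_card (n := 1) (by rw [Nat.card_zpowers, ha, pow_one])
  obtain ⟨c, hc, hne⟩ :=
    hzpowers.exists_fixed_point_of_prime_dvd_card_of_fixed_point (G ⧸ A) hqi hone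
  obtain ⟨g, rfl⟩ := QuotientGroup.mk_surjective c
  have hconj : g⁻¹ * a * g ∈ A := by
    rw [mul_assoc]
    exact QuotientGroup.eq.1 (hc ⟨a, Subgroup.mem_zpowers a⟩).symm
  have ha_ne : (a : G) ≠ 1 := by
    rw [Ne, ← orderOf_eq_one_iff, Subgroup.orderOf_coe, ha]
    exact hq.ne_one
  exact hne (QuotientGroup.eq.2 (by simpa using hA a.2 ha_ne hconj))

theorem disjoint_commutator [Finite G] [IsMulCommutative A] (hA : IsMalnormal A) :
    Disjoint A (commutator G) := by
  refine Subgroup.disjoint_def.2 fun {a} ha haG ↦ ?_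
  rw [← orderOf_eq_one_iff]
  exact Nat.eq_one_of_dvd_coprimes hA.coprime_card_index (Subgroup.orderOf_dvd_natCard A ha)
    (orderOf_dvd_of_pow_eq_one (hA.pow_index_eq_one_of_mem_commutator ha haG))

theorem fixedPointFree_conjNormal (hA : IsMalnormal A) {N : Subgroup G} [N.Normal]
    (hAN : Disjoint A N) {a : G} (ha : a ∈ A) (ha_ne : a ≠ 1) :
    MonoidHom.FixedPointFree (MulAut.conjNormal a : MulAut N) := by
  intro n hn
  have hcomm : a * n = n * a := by
    rw [← mul_inv_eq_iff_eq_mul, ← MulAut.conjNormal_apply, hn]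
  have hnA : (n : G) ∈ A := hA ha ha_ne (by rwa [mul_assoc, hcomm, inv_mul_cancel_left])
  exact Subtype.ext (Subgroup.disjoint_def.1 hAN hnA n.2)

end IsMalnormal

section NormalSubgroup

variable {G : Type*} [Group G] {N : Subgroup G} [N.Normal] {p : ℕ}

theorem mem_normalizer_map_subtype_of_conjNormal_smul_eq {P : Sylow p N} {g : G}
    (h : (MulAut.conjNormal g : MulAut N) • P = P) :
    g ∈ Subgroup.normalizer ((P : Subgroup N).map N.subtype : Set G) := by
  rw [Subgroup.mem_normalizer_iff_map_conj_eq]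
  conv_rhs => rw [← h]
  rw [Subgroup.map_map]
  exact ((P : Subgroup N).map_map N.subtype (MulAut.conjNormal g : MulAut N).toMonoidHom).symm

-- The centralizer of `a` permutes the Sylow subgroups fixed by `a`, of which there is only one.
theorem exists_sylow_centralizer_le_normalizer [Finite N] [Fact p.Prime] {a : G}
    (ha : MonoidHom.FixedPointFree (MulAut.conjNormal a : MulAut N)) :
    ∃ P : Sylow p N, Subgroup.centralizer {a} ≤
      Subgroup.normalizer ((P : Subgroup N).map N.subtype : Set G) := by
  obtain ⟨P, hP⟩ := exists_sylow_smul_eq_of_fixedPointFree (p := p) ha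
  refine ⟨P, fun g hg ↦ mem_normalizer_map_subtype_of_conjNormal_smul_eq ?_⟩
  refine sylow_eq_of_mulAut_smul_eq ha ?_ hP
  rw [← mul_smul, ← map_mul, ← Subgroup.mem_centralizer_singleton_iff.1 hg, map_mul, mul_smul, hP]

end NormalSubgroup

section AbelianMaximalSubgroup

variable {G : Type*} [Group G] {A : Subgroup G} [IsMulCommutative A]

theorem le_centralizer_singleton {a : G} (ha : a ∈ A) : A ≤ Subgroup.centralizer {a} :=
  A.le_centralizer.trans (Subgroup.centralizer_le (Set.singleton_subset_iff.2 ha))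

theorem IsMalnormal.isSolvable_of_isCoatom [Finite G] (hA : IsMalnormal A) (hcoatom : IsCoatom A)
    (hne : A ≠ ⊥) : Group.IsSolvable G := by
  obtain ⟨a, haA, ha_ne⟩ := A.bot_or_exists_ne_one.resolve_left hne
  rcases eq_or_ne (commutator G) ⊥ with hcomm | hcomm
  · exact ⟨1, hcomm⟩
  obtain ⟨p, hp, hpN⟩ := Nat.exists_prime_and_dvd (mt Subgroup.card_eq_one.1 hcomm)
  have : Fact p.Prime := ⟨hp⟩
  obtain ⟨P, hP⟩ := exists_sylow_centralizer_le_normalizer (p := p)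
    (hA.fixedPointFree_conjNormal hA.disjoint_commutator haA ha_ne)
  set S : Subgroup G := (P : Subgroup (commutator G)).map (commutator G).subtype
  have hS_ne : S ≠ ⊥ := by
    rw [Ne, Subgroup.map_eq_bot_iff_of_injective _ (commutator G).subtype_injective]
    exact P.ne_bot_of_dvd_card hpN
  have hSA : ¬ S ≤ A := fun h ↦
    hS_ne (le_bot_iff.1 (hA.disjoint_commutator h (Subgroup.map_subtype_le _)))
  have hsup : A ⊔ S = ⊤ := hcoatom.2 _ (left_lt_sup.2 hSA)
  have : S.Normal := Subgroup.normalizer_eq_top_iff.1 <| top_le_iff.1 <|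
    hsup.ge.trans (sup_le ((le_centralizer_singleton haA).trans hP) Subgroup.le_normalizer)
  have : Group.IsNilpotent S := (P.2.map (commutator G).subtype).isNilpotent
  exact isSolvable_of_sup_eq_top A S hsup

theorem mem_normalizer_of_map_conj_le {B : Subgroup G} [B.FiniteIndex] {g : G}
    (h : B.map (MulAut.conj g : G →* G) ≤ B) : g ∈ Subgroup.normalizer (B : Set G) := by
  have : (B.map (MulAut.conj g : G →* G)).FiniteIndex :=
    ⟨by rw [Subgroup.index_map_equiv]; exact Subgroup.FiniteIndex.index_ne_zero⟩
  refine Subgroup.mem_normalizer_iff_map_conj_eq.2 (h.eq_of_not_lt fun hlt ↦ ?_)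
  exact (Subgroup.index_strictAnti hlt).ne (B.index_map_equiv _).symm

-- For `g ∉ A` the centralizer of `a` contains both `A` and `gAg⁻¹`, so `a` is central.
theorem mem_normalCore_of_isCoatom [A.FiniteIndex] (hA : IsCoatom A) {a g : G} (ha : a ∈ A)
    (hconj : g⁻¹ * a * g ∈ A) (hg : g ∉ A) : a ∈ A.normalCore := by
  by_cases hnormal : A.Normal
  · rwa [A.normalCore_eq_self]
  have hnormalizer : Subgroup.normalizer (A : Set G) = A :=
    (hA.le_iff_eq (mt Subgroup.normalizer_eq_top_iff.1 hnormal)).1 Subgroup.le_normalizer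
  have hmap : A.map (MulAut.conj g : G →* G) ≤ Subgroup.centralizer {a} := by
    rintro _ ⟨b, hb, rfl⟩
    have hcomm : Commute (g * b * g⁻¹) (g * (g⁻¹ * a * g) * g⁻¹) :=
      (Commute.conj_iff g).2 (setLike_mul_comm hb hconj)
    rw [Subgroup.mem_centralizer_singleton_iff]
    simpa [mul_assoc] using hcomm.eq
  have hcentralizer : Subgroup.centralizer {a} = ⊤ := by
    refine hA.2 _ ((le_centralizer_singleton ha).lt_of_ne fun h ↦ hg ?_)
    rw [← hnormalizer]
    exact mem_normalizer_of_map_conj_le (hmap.trans h.ge)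
  intro h
  have hcomm := Subgroup.mem_centralizer_singleton_iff.1 (hcentralizer ▸ Subgroup.mem_top h)
  rwa [hcomm, mul_inv_cancel_right]

theorem isMalnormal_map_mk'_normalCore [A.FiniteIndex] (hA : IsCoatom A) :
    IsMalnormal (A.map (QuotientGroup.mk' A.normalCore)) := by
  have mk_mem (b : G) :
      QuotientGroup.mk' A.normalCore b ∈ A.map (QuotientGroup.mk' A.normalCore) ↔ b ∈ A := by
    rw [← Subgroup.mem_comap, Subgroup.comap_map_eq_self]
    simpa using A.normalCore_le
  rintro _ ⟨a, ha, rfl⟩ ha_ne g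
  obtain ⟨g, rfl⟩ := QuotientGroup.mk'_surjective A.normalCore g
  rw [← map_inv, ← map_mul, ← map_mul, mk_mem, mk_mem]
  intro hconj
  by_contra hg
  exact ha_ne ((QuotientGroup.eq_one_iff a).2 (mem_normalCore_of_isCoatom hA ha hconj hg))

/-- **Herstein's theorem**, for a maximal subgroup of finite index. -/
theorem isSolvable_of_isCoatom [A.FiniteIndex] (hA : IsCoatom A) : Group.IsSolvable G := by
  by_cases hnormal : A.Normal
  · obtain ⟨y, -, hy⟩ := SetLike.exists_of_lt hA.lt_top
    exact isSolvable_of_sup_eq_top (Subgroup.zpowers y) A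
      (hA.2 _ (right_lt_sup.2 fun h ↦ hy (h (Subgroup.mem_zpowers y))))
  have hcore : Group.IsSolvable A.normalCore :=
    Group.isSolvable_of_isSolvable_injective (Subgroup.inclusion_injective A.normalCore_le)
  have hcoatom := isCoatom_map_of_ker_le (QuotientGroup.mk'_surjective A.normalCore) hA
    (by simpa using A.normalCore_le)
  have hne : A.map (QuotientGroup.mk' A.normalCore) ≠ ⊥ := fun h ↦ hnormal <| by
    rw [Subgroup.map_eq_bot_iff, QuotientGroup.ker_mk'] at h
    exact A.normalCore_le.antisymm h ▸ A.normalCore_normal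
  exact (Group.isSolvable_iff_subgroup_quotient A.normalCore).2
    ⟨hcore, (isMalnormal_map_mk'_normalCore hA).isSolvable_of_isCoatom hcoatom hne⟩

end AbelianMaximalSubgroup

section Sylow

variable {G : Type*} [Group G] {p : ℕ} {A : Subgroup G}

instance isMulCommutative_stabilizer_quotient [IsMulCommutative A] (c : G ⧸ A) :
    IsMulCommutative (stabilizer G c) := by
  obtain ⟨g, rfl⟩ := exists_smul_eq G ((1 : G) : G ⧸ A) c
  rw [stabilizer_smul_eq_stabilizer_map_conj, stabilizer_quotient]
  infer_instance

theorem exists_le_stabilizer_of_not_dvd_index [Fact p.Prime] (hA : ¬ p ∣ A.index)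
    {H : Subgroup G} (hH : IsPGroup p H) : ∃ c : G ⧸ A, H ≤ stabilizer G c := by
  obtain ⟨c, hc⟩ := hH.nonempty_fixed_point_of_prime_not_dvd_card (G ⧸ A) hA
  exact ⟨c, fun h hh ↦ hc ⟨h, hh⟩⟩

theorem le_normalizer_of_le [IsMulCommutative A] {H : Subgroup G} (h : H ≤ A) :
    A ≤ Subgroup.normalizer (H : Set G) :=
  A.le_centralizer.trans ((Subgroup.centralizer_le h).trans (Subgroup.centralizer_le_normalizer _))

theorem sylow_eq_of_le_of_le [IsMulCommutative A] {P Q : Sylow p G} (hP : (P : Subgroup G) ≤ A)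
    (hQ : (Q : Subgroup G) ≤ A) : P = Q := by
  have hsup : IsPGroup p ((P : Subgroup G) ⊔ Q : Subgroup G) :=
    P.isPGroup'.to_sup_of_normal_right' Q.isPGroup' (hP.trans (le_normalizer_of_le hQ))
  exact Sylow.ext ((P.is_maximal' hsup le_sup_left).symm.trans (Q.is_maximal' hsup le_sup_right))

theorem finite_sylow_of_not_dvd_index [IsMulCommutative A] [Fact p.Prime] (hA : ¬ p ∣ A.index) :
    Finite (Sylow p G) := by
  choose c hc using fun P : Sylow p G ↦ exists_le_stabilizer_of_not_dvd_index hA P.isPGroup'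
  have : Finite (G ⧸ A) := Nat.finite_of_card_ne_zero fun h ↦ hA (h ▸ dvd_zero p :)
  exact Finite.of_injective c fun P Q h ↦ sylow_eq_of_le_of_le (hc P) (h ▸ hc Q)

theorem exists_sylow_le_of_not_dvd_index [Fact p.Prime] (hA : ¬ p ∣ A.index) :
    ∃ P : Sylow p G, (P : Subgroup G) ≤ A := by
  obtain ⟨P⟩ : Nonempty (Sylow p G) := inferInstance
  obtain ⟨c, hc⟩ := exists_le_stabilizer_of_not_dvd_index hA P.isPGroup'
  obtain ⟨g, hg⟩ := exists_smul_eq G c ((1 : G) : G ⧸ A)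
  refine ⟨g • P, ?_⟩
  rw [← stabilizer_quotient A, ← hg, stabilizer_smul_eq_stabilizer_map_conj]
  exact Subgroup.map_mono hc

theorem card_sylow_dvd_index_of_le [IsMulCommutative A] [Fact p.Prime] [Finite (Sylow p G)]
    {P : Sylow p G} (hP : (P : Subgroup G) ≤ A) : Nat.card (Sylow p G) ∣ A.index := by
  rw [P.card_eq_index_normalizer]
  exact Subgroup.index_dvd_of_le (le_normalizer_of_le hP)

theorem sylow_normal_of_card_eq_one (h : Nat.card (Sylow p G) = 1) (P : Sylow p G) :
    (P : Subgroup G).Normal :=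
  have := (Nat.card_eq_one_iff_unique.1 h).1
  P.normal_of_subsingleton

theorem sylow_normal_of_index_lt [IsMulCommutative A] [A.FiniteIndex] [Fact p.Prime]
    {P : Sylow p G} (hP : (P : Subgroup G) ≤ A) (hA : A.index < p) : (P : Subgroup G).Normal := by
  have hpos : 0 < A.index := Nat.pos_of_ne_zero Subgroup.FiniteIndex.index_ne_zero
  have := finite_sylow_of_not_dvd_index (Nat.not_dvd_of_pos_of_lt hpos hA)
  have hlt : Nat.card (Sylow p G) < p :=
    (Nat.le_of_dvd hpos (card_sylow_dvd_index_of_le hP)).trans_lt hA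
  exact sylow_normal_of_card_eq_one
    ((card_sylow_modEq_one p G).eq_of_lt_of_lt hlt (Fact.out : p.Prime).one_lt) P

theorem eq_add_one_of_modEq_one_of_dvd {m n : ℕ} (hn : n ≡ 1 [MOD p]) (hn_ne : n ≠ 1)
    (hnm : n ∣ m) (hm_ne : m ≠ 0) (hm : m < 2 * p) : n = p + 1 ∧ m = p + 1 := by
  have hle : n ≤ m := Nat.le_of_dvd (Nat.pos_of_ne_zero hm_ne) hnm
  have hn_pos : 0 < n := Nat.pos_of_dvd_of_pos hnm (Nat.pos_of_ne_zero hm_ne)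
  have hn_eq : n - 1 = p := Nat.eq_of_dvd_of_lt_two_mul (by omega)
    ((Nat.modEq_iff_dvd' hn_pos).1 hn.symm) (by omega)
  have hm_eq : m = n := Nat.eq_of_dvd_of_lt_two_mul hm_ne hnm (by omega)
  omega

theorem index_eq_add_one_of_not_normal [IsMulCommutative A] [A.FiniteIndex] [Fact p.Prime]
    [Finite (Sylow p G)] {P : Sylow p G} (hP : (P : Subgroup G) ≤ A)
    (hnormal : ¬ (P : Subgroup G).Normal) (hA : A.index < 2 * p) :
    Nat.card (Sylow p G) = p + 1 ∧ A.index = p + 1 :=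
  eq_add_one_of_modEq_one_of_dvd (card_sylow_modEq_one p G)
    (fun h ↦ hnormal (sylow_normal_of_card_eq_one h P)) (card_sylow_dvd_index_of_le hP)
    Subgroup.FiniteIndex.index_ne_zero hA

theorem isCoatom_of_sylow_not_normal [IsMulCommutative A] [A.FiniteIndex] [Fact p.Prime]
    [Finite (Sylow p G)] {P : Sylow p G} (hP : (P : Subgroup G) ≤ A)
    (hnormal : ¬ (P : Subgroup G).Normal) (hA : A.index < 2 * p) : IsCoatom A := by
  obtain ⟨hcard, hindex⟩ := index_eq_add_one_of_not_normal hP hnormal hA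
  refine ⟨fun h ↦ ?_, fun M hM ↦ by_contra fun hM_ne ↦ ?_⟩
  · have := (Fact.out : p.Prime).pos
    rw [h, Subgroup.index_top] at hindex
    omega
  have : M.FiniteIndex := Subgroup.finiteIndex_of_le hM.le
  have hlt : A.relIndex M < p := by
    refine lt_of_mul_lt_mul_right' (a := 2) ?_
    calc A.relIndex M * 2 ≤ A.relIndex M * M.index :=
          Nat.mul_le_mul_left _ (M.one_lt_index_of_ne_top hM_ne)
      _ = A.index := Subgroup.relIndex_mul_index hM.le
      _ < p * 2 := mul_comm p 2 ▸ hA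
  have hPM : (P : Subgroup G) ≤ M := hP.trans hM.le
  have : ((P : Subgroup G).subgroupOf M).Normal :=
    sylow_normal_of_index_lt (A := A.subgroupOf M) (P := P.subtype hPM) (Subgroup.comap_mono hP) hlt
  have hle : (Subgroup.normalizer (P : Set G)).index ≤ M.index :=
    Subgroup.index_antitone (Subgroup.le_normalizer_of_normal_subgroupOf hPM)
  rw [← P.card_eq_index_normalizer, hcard, ← hindex] at hle
  exact hle.not_gt (Subgroup.index_strictAnti hM)

end Sylow

theorem normal_sylow_or_maximal_cyclic_of_small_index_general {G : Type*} [Group G] {p : ℕ}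
    (hp : p.Prime) (A : Subgroup G) [IsMulCommutative A] [A.FiniteIndex]
    (hA : A.index < 2 * p) :
    (∃ P : Sylow p G, (P : Subgroup G).Normal ∧ (P : Subgroup G) ≤ A) ∨
    (Group.IsSolvable G ∧ IsCoatom A ∧ (A.index = p ∨ A.index = p + 1)) := by
  have : Fact p.Prime := ⟨hp⟩
  by_cases hdvd : p ∣ A.index
  · have hindex : A.index = p :=
      Nat.eq_of_dvd_of_lt_two_mul Subgroup.FiniteIndex.index_ne_zero hdvd hA
    have hcoatom : IsCoatom A := isCoatom_of_index_prime (hindex.symm ▸ hp)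
    exact .inr ⟨isSolvable_of_isCoatom hcoatom, hcoatom, .inl hindex⟩
  have := finite_sylow_of_not_dvd_index hdvd
  obtain ⟨P, hP⟩ := exists_sylow_le_of_not_dvd_index hdvd
  refine or_iff_not_imp_left.2 fun h ↦ ?_
  have hnormal : ¬ (P : Subgroup G).Normal := fun hn ↦ h ⟨P, hn, hP⟩
  have hcoatom : IsCoatom A := isCoatom_of_sylow_not_normal hP hnormal hA
  exact ⟨isSolvable_of_isCoatom hcoatom, hcoatom,
    .inr (index_eq_add_one_of_not_normal hP hnormal hA).2⟩

theorem normal_sylow_or_maximal_cyclic_of_small_index {G : Type*} [Group G] [Fintype G]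
    (p : ℕ) (h1 : 1 < Fintype.card G)
    (hp : p.Prime) (hpd : p ∣ Fintype.card G)
    (hpmax : ∀ r : ℕ, r.Prime → r ∣ Fintype.card G → r ≤ p)
    (x : G) (hx : (Subgroup.zpowers x).index < 2 * p) :
    (∃ P : Sylow p G, (P : Subgroup G).Normal ∧ IsCyclic (P : Subgroup G)) ∨
    (IsSolvable G ∧ IsCoatom (Subgroup.zpowers x) ∧
      ((Subgroup.zpowers x).index = p ∨ (Subgroup.zpowers x).index = p + 1)) :=
  (normal_sylow_or_maximal_cyclic_of_small_index_general hp (Subgroup.zpowers x) hx).imp_left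
    fun ⟨P, hnormal, hP⟩ ↦ ⟨P, hnormal, isCyclic_of_injective _ (Subgroup.inclusion_injective hP)⟩
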